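/- Let p be a prime and let F be a separable primitive binary form of degree n ≥ 3 over ℤ_p with leading coefficient f_0 ≠ 0, with canonical factorization F = ∏_{i=1}^{m} F_i. Then R_F is maximal if and only if R_{F_i} is maximal for every i ∈ {1, …, m} with F_i nonconstant. Under these equivalent conditions, every nonconstant F_i is irreducible over ℤ_p, and R_F is isomorphic as a ℤ_p-algebra to the product ∏_{i} R_{F_i} over the nonconstant factors F_i. -/

import Mathlib

open Polynomial Matrix MeasureTheory
open scoped Classical
noncomputable section
namespace BHS



/-! ### Binary forms and the rings they cut out, over a general base -/

variable (R K : Type) [CommRing R] [Field K] [Algebra R K]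

/-- The one-variable polynomial `F(x,1)` of the binary form of degree `n` with
coefficient vector `c` (so `F(x,z) = ∑ c i · x^(n-i) · z^i`), over `K`. -/
def binPoly (n : ℕ) (c : ℕ → R) : Polynomial K :=
  ∑ i ∈ Finset.range (n + 1), Polynomial.C (algebraMap R K (c i)) * Polynomial.X ^ (n - i)

/-- The étale algebra `K_F = K[x]/(F(x,1))`. -/
abbrev KF (n : ℕ) (c : ℕ → R) : Type := AdjoinRoot (binPoly R K n c)

/-- θ, the image of x in K_F. -/
def θF (n : ℕ) (c : ℕ → R) : KF R K n c := AdjoinRoot.root _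

/-- `ζ_i = ∑_{j<i} f_j θ^{i-j}`. -/
def ζF (n : ℕ) (c : ℕ → R) (i : ℕ) : KF R K n c :=
  ∑ j ∈ Finset.range i, algebraMap R (KF R K n c) (c j) * θF R K n c ^ (i - j)

/-- The ring `R_F`, as the free `R`-submodule of `K_F` with basis `1, ζ_1, …, ζ_{n-1}`
(a subring by Nakagawa's theorem). -/
def RFmod (n : ℕ) (c : ℕ → R) : Submodule R (KF R K n c) :=
  Submodule.span R ({1} ∪ {x | ∃ i, 1 ≤ i ∧ i ≤ n - 1 ∧ x = ζF R K n c i})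

/-- The fractional ideal `I_F^k`, as the free `R`-submodule of `K_F` with basis
`1, θ, …, θ^k, ζ_{k+1}, …, ζ_{n-1}`. -/
def IFmod (n : ℕ) (c : ℕ → R) (k : ℕ) : Submodule R (KF R K n c) :=
  Submodule.span R ({x | ∃ j ≤ k, x = θF R K n c ^ j} ∪
    {x | ∃ i, k + 1 ≤ i ∧ i ≤ n - 1 ∧ x = ζF R K n c i})

/-- `R_F` is the maximal order (the integral closure of `R`) in `K_F`. -/
def IsMaxOrder (n : ℕ) (c : ℕ → R) : Prop :=
  RFmod R K n c = Subalgebra.toSubmodule (integralClosure R (KF R K n c))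

/-- `M` is stable under multiplication by `R_F`, i.e. `M` is an `R_F`-submodule of `K_F`. -/
def IsStable (n : ℕ) (c : ℕ → R) (M : Submodule R (KF R K n c)) : Prop :=
  ∀ ρ ∈ RFmod R K n c, ∀ x ∈ M, ρ * x ∈ M

/-- `M` is an invertible fractional ideal of `R_F`. -/
def IsInvIdeal (n : ℕ) (c : ℕ → R) (M : Submodule R (KF R K n c)) : Prop :=
  IsStable R K n c M ∧
    ∃ N : Submodule R (KF R K n c), IsStable R K n c N ∧ M * N = RFmod R K n c

/-- The principal fractional ideal of `R_F` generated by `α`. -/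
def principal (n : ℕ) (c : ℕ → R) (α : KF R K n c) : Submodule R (KF R K n c) :=
  Submodule.span R {α} * RFmod R K n c

/-- `ρ` is a unit of the order `R_F`. -/
def IsUnitRF (n : ℕ) (c : ℕ → R) (ρ : KF R K n c) : Prop :=
  ρ ∈ RFmod R K n c ∧ ∃ σ ∈ RFmod R K n c, ρ * σ = 1

/-- `#R_F^×[2]`, the number of 2-torsion units of `R_F`. -/
def twoTorsUnitsCount (n : ℕ) (c : ℕ → R) : ℕ :=
  Nat.card {ρ : KF R K n c // ρ ∈ RFmod R K n c ∧ ρ ^ 2 = 1}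

/-- The number of 2-torsion elements of the ideal class group `Cl(R_F)`: the number of
invertible fractional ideals of `R_F` whose square is principal, counted modulo
principal fractional ideals. -/
def clTwoCount (n : ℕ) (c : ℕ → R) : ℕ :=
  Nat.card (Quot (fun (I J : {M : Submodule R (KF R K n c) //
      IsInvIdeal R K n c M ∧
        ∃ α : KF R K n c, IsUnit α ∧ M * M = principal R K n c α}) =>
    ∃ α : KF R K n c, IsUnit α ∧
      (I : Submodule R (KF R K n c)) =
        Submodule.span R {α} * (J : Submodule R (KF R K n c))))

/-- `α ∈ K_F` is totally positive: positive under every real embedding. -/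
def TotPos (n : ℕ) (c : ℕ → R) (α : KF R K n c) : Prop :=
  ∀ φ : KF R K n c →+* ℝ, 0 < φ α

/-- The number of 2-torsion elements of the narrow class group `Cl⁺(R_F)`. -/
def clTwoCountPlus (n : ℕ) (c : ℕ → R) : ℕ :=
  Nat.card (Quot (fun (I J : {M : Submodule R (KF R K n c) //
      IsInvIdeal R K n c M ∧
        ∃ α : KF R K n c, IsUnit α ∧ TotPos R K n c α ∧ M * M = principal R K n c α}) =>
    ∃ α : KF R K n c, IsUnit α ∧ TotPos R K n c α ∧
      (I : Submodule R (KF R K n c)) =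
        Submodule.span R {α} * (J : Submodule R (KF R K n c))))

/-- The order of the ideal class group of `R_F`. -/
def clCount (n : ℕ) (c : ℕ → R) : ℕ :=
  Nat.card (Quot (fun (I J : {M : Submodule R (KF R K n c) // IsInvIdeal R K n c M}) =>
    ∃ α : KF R K n c, IsUnit α ∧
      (I : Submodule R (KF R K n c)) =
        Submodule.span R {α} * (J : Submodule R (KF R K n c))))

/-- The order of the narrow class group of `R_F`. -/
def clCountPlus (n : ℕ) (c : ℕ → R) : ℕ :=
  Nat.card (Quot (fun (I J : {M : Submodule R (KF R K n c) // IsInvIdeal R K n c M}) =>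
    ∃ α : KF R K n c, IsUnit α ∧ TotPos R K n c α ∧
      (I : Submodule R (KF R K n c)) =
        Submodule.span R {α} * (J : Submodule R (KF R K n c))))




/-! ### p-adic machinery -/

variable (p : ℕ) [Fact p.Prime]

instance : MeasurableSpace ℤ_[p] := borel _
instance : BorelSpace ℤ_[p] := ⟨rfl⟩

/-- Haar probability measure on `ℤ_p^n`. -/
def haarP (n : ℕ) : Measure (Fin n → ℤ_[p]) :=
  Measure.addHaarMeasure ⟨⟨Set.univ, isCompact_univ⟩, by rw [interior_univ]; exact Set.univ_nonempty⟩

/-- The `p`-adic density of `A` within `B` (subsets of the coefficient space `ℤ_p^n`). -/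
def densIn (n : ℕ) (A B : Set (Fin n → ℤ_[p])) : ℝ :=
  (haarP p n A).toReal / (haarP p n B).toReal

/-- The coefficient vector of the degree-`n` binary form with leading coefficient `f0` and
remaining coefficients `v`. -/
def consF0 (n : ℕ) (f0 : ℤ_[p]) (v : Fin n → ℤ_[p]) : ℕ → ℤ_[p] :=
  fun j => if j = 0 then f0 else if h : j - 1 < n then v ⟨j - 1, h⟩ else 0

/-- The reduction of the binary form with coefficients `c` modulo `p`, as a polynomial in
two variables `x = X 0`, `z = X 1` over `F_p`. -/
def redForm (n : ℕ) (c : ℕ → ℤ_[p]) : MvPolynomial (Fin 2) (ZMod p) :=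
  ∑ i ∈ Finset.range (n + 1),
    MvPolynomial.C (PadicInt.toZMod (c i)) * MvPolynomial.X 0 ^ (n - i) * MvPolynomial.X 1 ^ i

/-- `F` is squareful over `ℤ_p`: `F ≡ κ·z^{e}·H² (mod p)` with `e > 0`, `κ ∈ F_p^×` and
`H` a monic binary form over `F_p` (hence not divisible by `z`). -/
def SquarefulP (n : ℕ) (c : ℕ → ℤ_[p]) : Prop :=
  ∃ (κ : (ZMod p)ˣ) (e d : ℕ) (H : MvPolynomial (Fin 2) (ZMod p)),
    0 < e ∧ H.IsHomogeneous d ∧ MvPolynomial.coeff (Finsupp.single 0 d) H = 1 ∧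
    redForm p n c = MvPolynomial.C (κ : ZMod p) * MvPolynomial.X 1 ^ e * H ^ 2

/-- `F` is evenly ramified over `ℤ_p`: `F ≡ κ·H² (mod p)` with `κ ∈ F_p^×`. -/
def EvenRamP (n : ℕ) (c : ℕ → ℤ_[p]) : Prop :=
  ∃ (κ : (ZMod p)ˣ) (H : MvPolynomial (Fin 2) (ZMod p)),
    redForm p n c = MvPolynomial.C (κ : ZMod p) * H ^ 2

/-- `F` is primitive over `ℤ_p`: its coefficients generate the unit ideal. -/
def PrimP (n : ℕ) (c : ℕ → ℤ_[p]) : Prop := ∃ i ≤ n, IsUnit (c i)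

/-- `F` is separable (of degree `n`) over `ℚ_p`. -/
def SepDegP (n : ℕ) (c : ℕ → ℤ_[p]) : Prop :=
  (binPoly ℤ_[p] ℚ_[p] n c).Separable ∧ (binPoly ℤ_[p] ℚ_[p] n c).natDegree = n

/-- The determinant of the Sylvester matrix of `F(x,1)` (of formal degree n) and
`F'(x,1)` (of formal degree n-1); it equals `±f_0` times the discriminant of the form. -/
def sylvDet (S : Type) [CommRing S] (n : ℕ) (c : ℕ → S) : S :=
  Matrix.det (Matrix.of (fun (i j : Fin (n + (n - 1))) =>
    if (i : ℕ) < n - 1 then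
      (if (i : ℕ) ≤ (j : ℕ) ∧ (j : ℕ) ≤ (i : ℕ) + n then c ((j : ℕ) - (i : ℕ)) else 0)
    else
      (if (i : ℕ) - (n - 1) ≤ (j : ℕ) ∧ (j : ℕ) ≤ ((i : ℕ) - (n - 1)) + (n - 1) then
        ((n - ((j : ℕ) - ((i : ℕ) - (n - 1))) : ℕ) : S) * c ((j : ℕ) - ((i : ℕ) - (n - 1)))
      else 0)))

/-- The discriminant of the form with coefficients `c` is not divisible by `p²`. -/
def DiscOK (n : ℕ) (c : ℕ → ℤ_[p]) : Prop :=
  ¬ ((p : ℤ_[p]) ^ 2 * c 0 ∣ sylvDet ℤ_[p] n c)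

/-- The reduction modulo `p` of the degree-`n` binary form with coefficients `c` is a
separable binary form over `F_p`. -/
def SepFormModP (n : ℕ) (c : ℕ → ℤ_[p]) : Prop :=
  (∑ i ∈ Finset.range (n + 1),
      Polynomial.C (PadicInt.toZMod (c i)) * (Polynomial.X : Polynomial (ZMod p)) ^ (n - i)).Separable ∧
  n - 1 ≤ (∑ i ∈ Finset.range (n + 1),
      Polynomial.C (PadicInt.toZMod (c i)) * (Polynomial.X : Polynomial (ZMod p)) ^ (n - i)).natDegree



/-- The binary form `F(x,1)` as a polynomial over the base ring itself. -/
def binPolyR (S : Type) [CommRing S] (n : ℕ) (c : ℕ → S) : Polynomial S :=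
  ∑ i ∈ Finset.range (n + 1), Polynomial.C (c i) * Polynomial.X ^ (n - i)

/-- The reduction modulo `p` of `F(x,1)` for a form of degree `d`. -/
def redPolyDeg (p : ℕ) [Fact p.Prime] (d : ℕ) (c : ℕ → ℤ_[p]) : Polynomial (ZMod p) :=
  ∑ i ∈ Finset.range (d + 1),
    Polynomial.C (PadicInt.toZMod (c i)) * Polynomial.X ^ (d - i)

/-- The ring `R_F` as a subalgebra of `K_F` (generated by the `ζ_i`; by Nakagawa's theorem
this coincides with the span of `1, ζ_1, …, ζ_{n-1}`). -/
def RFalg (R K : Type) [CommRing R] [Field K] [Algebra R K] (n : ℕ) (c : ℕ → R) :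
    Subalgebra R (KF R K n c) :=
  Algebra.adjoin R {x | ∃ i, 1 ≤ i ∧ i ≤ n - 1 ∧ x = ζF R K n c i}

-- PART 1
theorem binPoly_eq_map {R K : Type} [CommRing R] [Field K] [Algebra R K] (n : ℕ) (c : ℕ → R) :
    binPoly R K n c = (binPolyR R n c).map (algebraMap R K) := by
  simp [binPoly, binPolyR, Polynomial.map_sum]

theorem coeff_binPolyR {S : Type} [CommRing S] (n : ℕ) (c : ℕ → S) {l : ℕ} (hl : l ≤ n) :
    (binPolyR S n c).coeff (n - l) = c l := by
  unfold binPolyR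
  rw [Polynomial.finsetSum_coeff, Finset.sum_eq_single l]
  · simp
  · intro b hb hbl
    rw [Polynomial.coeff_C_mul_X_pow, if_neg]
    have := Finset.mem_range.1 hb
    omega
  · intro h
    exact absurd (Finset.mem_range.2 (by omega)) h

theorem natDegree_binPolyR_le {S : Type} [CommRing S] (n : ℕ) (c : ℕ → S) :
    (binPolyR S n c).natDegree ≤ n := by
  unfold binPolyR
  refine Polynomial.natDegree_sum_le_of_forall_le _ _ fun i _ => ?_
  exact (Polynomial.natDegree_C_mul_X_pow_le _ _).trans (by omega)

theorem natDegree_binPolyR {S : Type} [CommRing S] (n : ℕ) (c : ℕ → S) (h : c 0 ≠ 0) :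
    (binPolyR S n c).natDegree = n := by
  refine le_antisymm (natDegree_binPolyR_le n c) (Polynomial.le_natDegree_of_ne_zero ?_)
  have := coeff_binPolyR n c (Nat.zero_le n)
  simp only [Nat.sub_zero] at this
  rwa [this]

section
variable {p : ℕ} [Fact p.Prime]

theorem natDegree_binPoly (n : ℕ) (c : ℕ → ℤ_[p]) (h : c 0 ≠ 0) :
    (binPoly ℤ_[p] ℚ_[p] n c).natDegree = n := by
  rw [binPoly_eq_map, Polynomial.natDegree_map_eq_of_injective (FaithfulSMul.algebraMap_injective _ _),
    natDegree_binPolyR n c h]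

theorem binPoly_ne_zero (n : ℕ) (c : ℕ → ℤ_[p]) (h : c 0 ≠ 0) :
    binPoly ℤ_[p] ℚ_[p] n c ≠ 0 := by
  rw [binPoly_eq_map, Polynomial.map_ne_zero_iff (FaithfulSMul.algebraMap_injective _ _)]
  intro h0
  have := coeff_binPolyR n c (Nat.zero_le n)
  rw [h0] at this
  exact h (by simpa using this.symm)

theorem aeval_θF_eq_zero (n : ℕ) (c : ℕ → ℤ_[p]) (u : ℤ_[p][X]) :
    aeval (θF ℤ_[p] ℚ_[p] n c) u = 0 ↔
      binPoly ℤ_[p] ℚ_[p] n c ∣ u.map (algebraMap ℤ_[p] ℚ_[p]) := by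
  rw [← AdjoinRoot.mk_eq_zero, ← AdjoinRoot.aeval_eq, aeval_map_algebraMap, θF]

theorem aeval_θF_self (n : ℕ) (c : ℕ → ℤ_[p]) :
    aeval (θF ℤ_[p] ℚ_[p] n c) (binPolyR ℤ_[p] n c) = 0 := by
  rw [aeval_θF_eq_zero, binPoly_eq_map]

theorem sum_θF (n : ℕ) (c : ℕ → ℤ_[p]) :
    ∑ i ∈ Finset.range (n + 1), algebraMap ℤ_[p] (KF ℤ_[p] ℚ_[p] n c) (c i) *
      θF ℤ_[p] ℚ_[p] n c ^ (n - i) = 0 := by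
  have := aeval_θF_self n c
  simpa [binPolyR, map_sum] using this

/-- The lattice spanned by `1, θ, …, θ^(n-1)`. -/
def LL (n : ℕ) (c : ℕ → ℤ_[p]) : Submodule ℤ_[p] (KF ℤ_[p] ℚ_[p] n c) :=
  (Polynomial.degreeLT ℤ_[p] n).map (aeval (θF ℤ_[p] ℚ_[p] n c)).toLinearMap

theorem mem_LL {n : ℕ} {c : ℕ → ℤ_[p]} {x : KF ℤ_[p] ℚ_[p] n c} :
    x ∈ LL n c ↔ ∃ u : ℤ_[p][X], u.degree < n ∧ aeval (θF ℤ_[p] ℚ_[p] n c) u = x := by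
  simp [LL, Submodule.mem_map, Polynomial.mem_degreeLT]

theorem pow_mem_LL {n : ℕ} {c : ℕ → ℤ_[p]} {j : ℕ} (hj : j < n) :
    θF ℤ_[p] ℚ_[p] n c ^ j ∈ LL n c := by
  refine mem_LL.2 ⟨X ^ j, ?_, by simp⟩
  rw [Polynomial.degree_X_pow]
  exact_mod_cast hj

theorem algebraMap_mul_pow_mem_LL {n : ℕ} {c : ℕ → ℤ_[p]} {j : ℕ} (a : ℤ_[p]) (hj : j < n) :
    algebraMap ℤ_[p] _ a * θF ℤ_[p] ℚ_[p] n c ^ j ∈ LL n c := by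
  rw [← Algebra.smul_def]
  exact Submodule.smul_mem _ _ (pow_mem_LL hj)

/-- `ζ_i θ^j` lies in the lattice. -/
theorem ζF_mul_pow_mem {n : ℕ} {c : ℕ → ℤ_[p]} {i j : ℕ} (hi : i < n) (hj : j < n) :
    ζF ℤ_[p] ℚ_[p] n c i * θF ℤ_[p] ℚ_[p] n c ^ j ∈ LL n c := by
  by_cases hij : i + j < n
  · rw [ζF, Finset.sum_mul]
    refine Submodule.sum_mem _ fun l hl => ?_
    rw [mul_assoc, ← pow_add]
    exact algebraMap_mul_pow_mem_LL _ (by omega)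
  · have h0 := sum_θF n c
    rw [← Finset.sum_range_add_sum_Ico _ (show i ≤ n + 1 by omega)] at h0
    have h1 : ζF ℤ_[p] ℚ_[p] n c i * θF ℤ_[p] ℚ_[p] n c ^ j =
        (∑ l ∈ Finset.range i, algebraMap ℤ_[p] (KF ℤ_[p] ℚ_[p] n c) (c l) *
          θF ℤ_[p] ℚ_[p] n c ^ (n - l)) * θF ℤ_[p] ℚ_[p] n c ^ (i + j - n) := by
      rw [ζF, Finset.sum_mul, Finset.sum_mul]
      refine Finset.sum_congr rfl fun l hl => ?_
      have := Finset.mem_range.1 hl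
      rw [mul_assoc, mul_assoc, ← pow_add, ← pow_add]
      congr 2
      omega
    rw [h1, eq_neg_of_add_eq_zero_left h0, neg_mul, Finset.sum_mul]
    refine Submodule.neg_mem _ (Submodule.sum_mem _ fun l hl => ?_)
    have := Finset.mem_Ico.1 hl
    rw [mul_assoc, ← pow_add]
    exact algebraMap_mul_pow_mem_LL _ (by omega)

theorem mul_mem_LL_of_forall {n : ℕ} {c : ℕ → ℤ_[p]} {x : KF ℤ_[p] ℚ_[p] n c}
    (h : ∀ j < n, x * θF ℤ_[p] ℚ_[p] n c ^ j ∈ LL n c) :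
    ∀ y ∈ LL n c, x * y ∈ LL n c := by
  intro y hy
  obtain ⟨u, hu, rfl⟩ := mem_LL.1 hy
  rw [aeval_eq_sum_range, Finset.mul_sum]
  refine Submodule.sum_mem _ fun j hj => ?_
  rw [mul_smul_comm]
  by_cases hu0 : u = 0
  · simp [hu0]
  refine Submodule.smul_mem _ _ (h j ?_)
  have := (Polynomial.natDegree_lt_iff_degree_lt hu0).2 hu
  have := Finset.mem_range.1 hj
  omega

theorem ζF_mul_mem {n : ℕ} {c : ℕ → ℤ_[p]} {i : ℕ} (hi : i < n) :
    ∀ y ∈ LL n c, ζF ℤ_[p] ℚ_[p] n c i * y ∈ LL n c :=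
  mul_mem_LL_of_forall fun _ hj => ζF_mul_pow_mem hi hj

theorem RFmod_mul_mem {n : ℕ} {c : ℕ → ℤ_[p]} (hn : 1 ≤ n) {x : KF ℤ_[p] ℚ_[p] n c}
    (hx : x ∈ RFmod ℤ_[p] ℚ_[p] n c) : ∀ y ∈ LL n c, x * y ∈ LL n c := by
  intro y hy
  induction hx using Submodule.span_induction with
  | mem x hx =>
    rcases hx with hx | ⟨i, h1, h2, rfl⟩
    · rw [Set.mem_singleton_iff.1 hx, one_mul]; exact hy
    · exact ζF_mul_mem (by omega) y hy
  | zero => simp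
  | add a b _ _ ha hb => rw [add_mul]; exact Submodule.add_mem _ ha hb
  | smul a b _ hb => rw [smul_mul_assoc]; exact Submodule.smul_mem _ _ hb

theorem ζF_mem_RFmod {n : ℕ} {c : ℕ → ℤ_[p]} {i : ℕ} (h1 : 1 ≤ i) (h2 : i ≤ n - 1) :
    ζF ℤ_[p] ℚ_[p] n c i ∈ RFmod ℤ_[p] ℚ_[p] n c :=
  Submodule.subset_span (Or.inr ⟨i, h1, h2, rfl⟩)

theorem one_mem_RFmod {n : ℕ} {c : ℕ → ℤ_[p]} :
    (1 : KF ℤ_[p] ℚ_[p] n c) ∈ RFmod ℤ_[p] ℚ_[p] n c :=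
  Submodule.subset_span (Or.inl rfl)

/-- The key divisibility. -/
theorem exists_lead {n : ℕ} {c : ℕ → ℤ_[p]} (hc : c 0 ≠ 0) (hprim : PrimP p n c)
    {k : ℕ} (_hk1 : 1 ≤ k) (hk2 : k < n) {u : ℤ_[p][X]} (hu : u.natDegree ≤ k)
    (h : aeval (θF ℤ_[p] ℚ_[p] n c) u * θF ℤ_[p] ℚ_[p] n c ^ (n - k) ∈ LL n c) :
    ∃ q : ℤ_[p], u.coeff k = q * c 0 := by
  obtain ⟨w, hw, hwe⟩ := mem_LL.1 h
  set v : ℤ_[p][X] := u * X ^ (n - k) - w with hv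
  have hv0 : aeval (θF ℤ_[p] ℚ_[p] n c) v = 0 := by
    rw [hv, map_sub, hwe]; simp
  have hwn : w.coeff n = 0 := Polynomial.coeff_eq_zero_of_degree_lt hw
  have hvn : v.coeff n = u.coeff k := by
    rw [hv, Polynomial.coeff_sub, hwn, sub_zero]
    have : n = k + (n - k) := by omega
    conv_lhs => rw [this]
    rw [show k + (n - k) - k = n - k by omega, Polynomial.coeff_mul_X_pow]
  have hvd : v.natDegree ≤ n := by
    rw [hv]
    refine (Polynomial.natDegree_sub_le _ _).trans (max_le ?_ ?_)
    · refine Polynomial.natDegree_mul_le.trans ?_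
      rw [Polynomial.natDegree_X_pow]; omega
    · exact Polynomial.natDegree_le_of_degree_le hw.le
  obtain ⟨Q, hQ⟩ := (aeval_θF_eq_zero n c v).1 hv0
  have hQd : Q.natDegree = 0 := by
    by_cases hQ0 : Q = 0
    · simp [hQ0]
    have h1 := congrArg Polynomial.natDegree hQ
    rw [Polynomial.natDegree_mul (binPoly_ne_zero n c hc) hQ0, natDegree_binPoly n c hc,
      Polynomial.natDegree_map_eq_of_injective (FaithfulSMul.algebraMap_injective _ _)] at h1
    omega
  rw [Polynomial.eq_C_of_natDegree_eq_zero hQd] at hQ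
  set q := Q.coeff 0
  have hco : ∀ l ≤ n, algebraMap ℤ_[p] ℚ_[p] (v.coeff (n - l)) = algebraMap ℤ_[p] ℚ_[p] (c l) * q := by
    intro l hl
    have := congrArg (fun P => Polynomial.coeff P (n - l)) hQ
    simpa only [Polynomial.coeff_map, Polynomial.coeff_mul_C, binPoly_eq_map, coeff_binPolyR n c hl]
      using this
  obtain ⟨l, hl, hul⟩ := hprim
  obtain ⟨s, hs⟩ := hul.exists_right_inv
  have hq : q = algebraMap ℤ_[p] ℚ_[p] (s * v.coeff (n - l)) := by
    rw [map_mul, hco l hl, ← mul_assoc, ← map_mul, mul_comm s, hs, map_one, one_mul]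
  refine ⟨s * v.coeff (n - l), ?_⟩
  apply FaithfulSMul.algebraMap_injective ℤ_[p] ℚ_[p]
  have h0 := hco 0 (Nat.zero_le _)
  rw [Nat.sub_zero, hvn] at h0
  rw [h0, map_mul, ← hq, mul_comm]

theorem mem_RFmod_aux {n : ℕ} {c : ℕ → ℤ_[p]} (hn : 1 ≤ n) (hc : c 0 ≠ 0) (hprim : PrimP p n c)
    (k : ℕ) : k < n → ∀ u : ℤ_[p][X], u.natDegree ≤ k →
      (∀ y ∈ LL n c, aeval (θF ℤ_[p] ℚ_[p] n c) u * y ∈ LL n c) →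
      aeval (θF ℤ_[p] ℚ_[p] n c) u ∈ RFmod ℤ_[p] ℚ_[p] n c := by
  induction k with
  | zero =>
    intro _ u hu _
    rw [Polynomial.eq_C_of_natDegree_le_zero hu, aeval_C, Algebra.algebraMap_eq_smul_one]
    exact Submodule.smul_mem _ _ one_mem_RFmod
  | succ k ih =>
    intro hk u hu h
    obtain ⟨q, hq⟩ := exists_lead hc hprim (k := k + 1) (by omega) hk hu
      (h _ (pow_mem_LL (by omega)))
    set z : ℤ_[p][X] := ∑ j ∈ Finset.range (k + 1), C (c j) * X ^ (k + 1 - j) with hz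
    have hza : aeval (θF ℤ_[p] ℚ_[p] n c) z = ζF ℤ_[p] ℚ_[p] n c (k + 1) := by
      simp [hz, ζF, map_sum]
    have hzc : z.coeff (k + 1) = c 0 := by
      rw [hz, Polynomial.finsetSum_coeff, Finset.sum_eq_single 0]
      · simp
      · intro b hb hb0
        rw [Polynomial.coeff_C_mul_X_pow, if_neg]
        have := Finset.mem_range.1 hb
        omega
      · simp
    have hzd : z.natDegree ≤ k + 1 := by
      refine Polynomial.natDegree_sum_le_of_forall_le _ _ fun i _ => ?_
      exact (Polynomial.natDegree_C_mul_X_pow_le _ _).trans (by omega)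
    set u' := u - C q * z with hu'
    have ha : aeval (θF ℤ_[p] ℚ_[p] n c) u =
        aeval (θF ℤ_[p] ℚ_[p] n c) u' + q • ζF ℤ_[p] ℚ_[p] n c (k + 1) := by
      rw [hu', map_sub, map_mul, hza, aeval_C, Algebra.smul_def]; ring
    rw [ha]
    refine Submodule.add_mem _ (ih (by omega) u' ?_ ?_)
      (Submodule.smul_mem _ _ (ζF_mem_RFmod (by omega) (by omega)))
    · rw [Polynomial.natDegree_le_iff_coeff_eq_zero]
      intro N hN
      rcases Nat.lt_or_ge (k + 1) N with h1 | h1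
      · rw [hu', Polynomial.coeff_sub, Polynomial.coeff_C_mul,
          Polynomial.coeff_eq_zero_of_natDegree_lt (lt_of_le_of_lt hu h1),
          Polynomial.coeff_eq_zero_of_natDegree_lt (lt_of_le_of_lt hzd h1)]
        simp
      · obtain rfl : N = k + 1 := by omega
        rw [hu', Polynomial.coeff_sub, Polynomial.coeff_C_mul, hzc, hq, sub_self]
    · intro y hy
      have : aeval (θF ℤ_[p] ℚ_[p] n c) u' * y =
          aeval (θF ℤ_[p] ℚ_[p] n c) u * y - q • (ζF ℤ_[p] ℚ_[p] n c (k + 1) * y) := by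
        rw [ha, add_mul, smul_mul_assoc]; ring
      rw [this]
      exact Submodule.sub_mem _ (h y hy) (Submodule.smul_mem _ _ (ζF_mul_mem hk y hy))

/-- `R_F` is the multiplier ring of the lattice. -/
theorem mem_RFmod_iff {n : ℕ} {c : ℕ → ℤ_[p]} (hn : 1 ≤ n) (hc : c 0 ≠ 0) (hprim : PrimP p n c)
    (x : KF ℤ_[p] ℚ_[p] n c) :
    x ∈ RFmod ℤ_[p] ℚ_[p] n c ↔ ∀ y ∈ LL n c, x * y ∈ LL n c := by
  refine ⟨RFmod_mul_mem hn, fun h => ?_⟩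
  have h1 := h _ (pow_mem_LL (j := 0) (by omega))
  rw [pow_zero, mul_one] at h1
  obtain ⟨u, hu, rfl⟩ := mem_LL.1 h1
  refine mem_RFmod_aux hn hc hprim (n - 1) (by omega) u ?_ h
  by_cases hu0 : u = 0
  · simp [hu0]
  have := (Polynomial.natDegree_lt_iff_degree_lt hu0).2 hu
  omega
-- PART 2
theorem toZMod_eq_zero_iff (a : ℤ_[p]) : PadicInt.toZMod a = 0 ↔ (p : ℤ_[p]) ∣ a := by
  rw [← RingHom.mem_ker, PadicInt.ker_toZMod, PadicInt.maximalIdeal_eq_span_p,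
    Ideal.mem_span_singleton]

theorem isUnit_of_toZMod_ne_zero {a : ℤ_[p]} (h : PadicInt.toZMod a ≠ 0) : IsUnit a := by
  by_contra hu
  apply h
  rw [← RingHom.mem_ker, PadicInt.ker_toZMod]
  exact (IsLocalRing.mem_maximalIdeal _).2 hu

theorem toZMod_surjective : Function.Surjective (PadicInt.toZMod : ℤ_[p] →+* ZMod p) :=
  ZMod.ringHom_surjective _

theorem exists_C_mul_of_map_eq_zero {f : ℤ_[p][X]} (h : f.map (PadicInt.toZMod (p := p)) = 0) :
    ∃ r : ℤ_[p][X], f = C (p : ℤ_[p]) * r := by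
  refine (Polynomial.C_dvd_iff_dvd_coeff _ _).2 fun i => ?_
  rw [← toZMod_eq_zero_iff, ← Polynomial.coeff_map, h, Polynomial.coeff_zero]

section idem
variable {A : Type} [CommRing A] [Algebra ℤ_[p] A]

theorem smul_eq_zero_of_isUnit' {a : ℤ_[p]} (ha : IsUnit a) {x : A} (h : a • x = 0) : x = 0 := by
  obtain ⟨b, hb⟩ := ha.exists_left_inv
  rw [← one_smul ℤ_[p] x, ← hb, mul_smul, h, smul_zero]

theorem aeval_idem_mul {x : A} (hx : x * x = x) (q : ℤ_[p][X]) :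
    aeval x q * x = q.eval 1 • x := by
  induction q using Polynomial.induction_on' with
  | add a b ha hb => rw [map_add, add_mul, ha, hb, eval_add, add_smul]
  | monomial n a =>
    have : x ^ n * x = x := by
      induction n with
      | zero => simp
      | succ n ih => rw [pow_succ, mul_assoc, hx, ih]
    rw [aeval_monomial, mul_assoc, this, eval_monomial, one_pow, mul_one, Algebra.smul_def]

theorem idem_eq_zero {x y : A} (hx : x * x = x) (hy : IsIntegral ℤ_[p] y)
    (hxy : x = algebraMap ℤ_[p] A p * y) : x = 0 := by
  obtain ⟨g, hg, hgy⟩ := hy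
  have h1 : aeval x (g.scaleRoots (p : ℤ_[p])) = 0 := by
    rw [hxy]
    exact Polynomial.scaleRoots_aeval_eq_zero (by simpa [aeval_def] using hgy)
  have h2 := aeval_idem_mul hx (g.scaleRoots (p : ℤ_[p]))
  rw [h1, zero_mul] at h2
  refine smul_eq_zero_of_isUnit' ?_ h2.symm
  apply isUnit_of_toZMod_ne_zero
  rw [Polynomial.eval_eq_sum_range, map_sum, Polynomial.natDegree_scaleRoots,
    Finset.sum_eq_single g.natDegree]
  · simp [Polynomial.coeff_scaleRoots, hg.coeff_natDegree]
  · intro i hi hne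
    have := Finset.mem_range.1 hi
    have h3 : g.natDegree - i ≠ 0 := by omega
    simp [Polynomial.coeff_scaleRoots, h3]
  · simp

theorem isIntegral_aeval' {t : A} (ht : IsIntegral ℤ_[p] t) (r : ℤ_[p][X]) :
    IsIntegral ℤ_[p] (aeval t r) :=
  IsIntegral.of_mem_of_fg _ ht.fg_adjoin_singleton _ (aeval_mem_adjoin_singleton _ _)

theorem idem_trivial_aux {t : A} (ht : IsIntegral ℤ_[p] t) {g h : ℤ_[p][X]} (hg : aeval t g = 0)
    (hco : IsCoprime (h.map (PadicInt.toZMod (p := p))) (g.map (PadicInt.toZMod (p := p))))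
    (hx : aeval t h * aeval t h = aeval t h) : aeval t h = 1 := by
  obtain ⟨u', v', huv⟩ := hco
  obtain ⟨u, rfl⟩ := Polynomial.map_surjective _ toZMod_surjective u'
  obtain ⟨v, rfl⟩ := Polynomial.map_surjective _ toZMod_surjective v'
  obtain ⟨r, hr⟩ := exists_C_mul_of_map_eq_zero (f := u * h + v * g - 1)
    (by simp [huv])
  have h1 := congrArg (aeval t) hr
  simp only [map_sub, map_add, map_mul, hg, mul_zero, add_zero, map_one, aeval_C] at h1
  set x := aeval t h with hxdef
  have h2 : (1 - x) = algebraMap ℤ_[p] A p * (aeval t (-(r * (1 - h)))) := by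
    simp only [map_neg, map_mul, map_sub, map_one, ← hxdef]
    linear_combination (x - 1) * h1 - (aeval t u) * hx
  have h3 := idem_eq_zero (x := 1 - x) (by linear_combination hx) (isIntegral_aeval' ht _) h2
  linear_combination -h3

theorem idem_trivial {t : A} (ht : IsIntegral ℤ_[p] t) {g : ℤ_[p][X]} (hg : aeval t g = 0)
    {Q : (ZMod p)[X]} (hQ : Irreducible Q) {e : ℕ}
    (hgQ : g.map (PadicInt.toZMod (p := p)) ∣ Q ^ e)
    {x : A} (hxm : x ∈ Algebra.adjoin ℤ_[p] {t}) (hx : x * x = x) : x = 0 ∨ x = 1 := by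
  rw [Algebra.adjoin_singleton_eq_range_aeval] at hxm
  obtain ⟨h, rfl⟩ := hxm
  change aeval t h * aeval t h = aeval t h at hx
  change aeval t h = 0 ∨ aeval t h = 1
  by_cases hd : Q ∣ h.map (PadicInt.toZMod (p := p))
  · left
    have hd' : ¬ Q ∣ (1 - h).map (PadicInt.toZMod (p := p)) := by
      intro hd'
      apply hQ.not_isUnit
      apply isUnit_of_dvd_one
      have := dvd_add hd hd'
      simpa using this
    have := idem_trivial_aux ht hg (h := 1 - h)
      (((hQ.coprime_iff_not_dvd.2 hd').symm.pow_right (n := e)).of_isCoprime_of_dvd_right hgQ)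
      (by simp only [map_sub, map_one]; linear_combination hx)
    simp only [map_sub, map_one] at this
    linear_combination -this
  · right
    exact idem_trivial_aux ht hg
      (((hQ.coprime_iff_not_dvd.2 hd).symm.pow_right (n := e)).of_isCoprime_of_dvd_right hgQ) hx
end idem

theorem isIntegral_of_idem {A : Type} [CommRing A] [Algebra ℤ_[p] A] {x : A} (hx : x * x = x) :
    IsIntegral ℤ_[p] x := by
  refine ⟨X ^ 2 - X, ?_, ?_⟩
  · exact Polynomial.monic_X_pow_sub (by simp)
  · simp [sq, hx]

/-- no nontrivial idempotents in `K_G` gives irreducibility. -/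
theorem irreducible_of_idem {P : ℚ_[p][X]} (hP : P.Separable) (hd : 0 < P.natDegree)
    (h : ∀ x : AdjoinRoot P, x * x = x → x = 0 ∨ x = 1) : Irreducible P := by
  refine ⟨fun hu => by rw [Polynomial.natDegree_eq_zero_of_isUnit hu] at hd; exact hd.ne rfl, ?_⟩
  intro a b hab
  have hco : IsCoprime a b := by rw [hab] at hP; exact hP.isCoprime
  obtain ⟨u, v, huv⟩ := hco
  have hid : AdjoinRoot.mk P (u * a) * AdjoinRoot.mk P (u * a) = AdjoinRoot.mk P (u * a) := by
    rw [← map_mul, ← sub_eq_zero, ← map_sub, AdjoinRoot.mk_eq_zero]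
    refine ⟨- u * v, ?_⟩
    rw [hab]
    linear_combination (u * a) * huv
  rcases h _ hid with h0 | h1
  · right
    rw [AdjoinRoot.mk_eq_zero] at h0
    have hb : b ∣ u * a := (hab ▸ Dvd.intro_left a rfl).trans h0
    exact isUnit_of_dvd_one (huv ▸ dvd_add hb (Dvd.intro_left v rfl))
  · left
    rw [← map_one (AdjoinRoot.mk P), ← sub_eq_zero, ← map_sub, AdjoinRoot.mk_eq_zero] at h1
    have ha : a ∣ u * a - 1 := (hab ▸ Dvd.intro b rfl).trans h1
    have := dvd_sub (Dvd.intro_left u rfl : a ∣ u * a) ha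
    exact isUnit_of_dvd_one (by simpa using this)
-- PART 3
section decomp
variable {S : Type} [CommRing S] {m : ℕ} {d : Fin m → ℕ}

/-- The complementary products. -/
def PP (f : Fin m → S[X]) (i : Fin m) : S[X] := ∏ j ∈ Finset.univ.erase i, f j

theorem mul_PP (f : Fin m → S[X]) (i : Fin m) : f i * PP f i = ∏ j, f j :=
  Finset.mul_prod_erase _ _ (Finset.mem_univ i)

theorem map_PP {T : Type} [CommRing T] (φ : S →+* T) (f : Fin m → S[X]) (i : Fin m) :
    (PP f i).map φ = PP (fun j => (f j).map φ) i := by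
  simp [PP, Polynomial.map_prod]

theorem dvd_PP (f : Fin m → S[X]) {i j : Fin m} (h : i ≠ j) : f i ∣ PP f j :=
  Finset.dvd_prod_of_mem _ (Finset.mem_erase.2 ⟨h, Finset.mem_univ _⟩)

/-- Polynomial with given coefficients. -/
def UU (v : ((i : Fin m) × Fin (d i)) → S) (i : Fin m) : S[X] :=
  ∑ k : Fin (d i), C (v ⟨i, k⟩) * X ^ (k : ℕ)

theorem coeff_UU (v : ((i : Fin m) × Fin (d i)) → S) (i : Fin m) (k : Fin (d i)) :
    (UU v i).coeff k = v ⟨i, k⟩ := by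
  rw [UU, Polynomial.finsetSum_coeff, Finset.sum_eq_single k]
  · simp
  · intro b _ hb
    rw [Polynomial.coeff_C_mul_X_pow, if_neg]
    exact fun h => hb (Fin.ext h.symm)
  · simp

theorem degree_UU_lt (v : ((i : Fin m) × Fin (d i)) → S) (i : Fin m) :
    (UU v i).degree < d i := by
  rw [UU, ← Polynomial.mem_degreeLT]
  refine Submodule.sum_mem _ fun k _ => ?_
  rw [Polynomial.mem_degreeLT]
  exact (Polynomial.degree_C_mul_X_pow_le _ _).trans_lt (by exact_mod_cast k.2)

/-- The generalized Sylvester matrix. -/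
def NN (f : Fin m → S[X]) :
    Matrix ((i : Fin m) × Fin (d i)) ((i : Fin m) × Fin (d i)) S :=
  Matrix.of fun s t => (X ^ (s.2 : ℕ) * PP f s.1).coeff (finSigmaFinEquiv t : ℕ)

theorem vecMul_NN (f : Fin m → S[X]) (v : ((i : Fin m) × Fin (d i)) → S)
    (t : (i : Fin m) × Fin (d i)) :
    (v ᵥ* NN f) t = (∑ i, UU v i * PP f i).coeff (finSigmaFinEquiv t : ℕ) := by
  rw [Matrix.vecMul, dotProduct, Polynomial.finsetSum_coeff, Fintype.sum_sigma]
  refine Finset.sum_congr rfl fun i _ => ?_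
  rw [UU, Finset.sum_mul, Polynomial.finsetSum_coeff]
  refine Finset.sum_congr rfl fun k _ => ?_
  rw [mul_assoc, Polynomial.coeff_C_mul]
  rfl

theorem degree_comb_lt {f : Fin m → S[X]} (hf : ∀ i, (f i).natDegree ≤ d i)
    {u : Fin m → S[X]} (hu : ∀ i, (u i).degree < d i) :
    (∑ i, u i * PP f i).degree < (∑ i, d i : ℕ) := by
  rw [← Polynomial.mem_degreeLT]
  refine Submodule.sum_mem _ fun i _ => ?_
  rw [Polynomial.mem_degreeLT]
  by_cases hu0 : u i = 0
  · rw [hu0, zero_mul, Polynomial.degree_zero]; exact WithBot.bot_lt_coe _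
  have h1 := (Polynomial.natDegree_lt_iff_degree_lt hu0).2 (hu i)
  have h2 : (PP f i).natDegree ≤ ∑ j ∈ Finset.univ.erase i, d j :=
    (Polynomial.natDegree_prod_le _ _).trans (Finset.sum_le_sum fun j _ => hf j)
  have h3 := Finset.add_sum_erase Finset.univ d (Finset.mem_univ i)
  refine (Polynomial.degree_le_natDegree).trans_lt ?_
  have h4 : (u i * PP f i).natDegree < ∑ i, d i := by
    refine Polynomial.natDegree_mul_le.trans_lt ?_
    omega
  exact_mod_cast h4

theorem eq_of_coeff_sigma {f g : S[X]} (hf : f.degree < (∑ i, d i : ℕ))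
    (hg : g.degree < (∑ i, d i : ℕ))
    (h : ∀ t : (i : Fin m) × Fin (d i), f.coeff (finSigmaFinEquiv t : ℕ) =
      g.coeff (finSigmaFinEquiv t : ℕ)) : f = g := by
  ext k
  by_cases hk : k < ∑ i, d i
  · have := h (finSigmaFinEquiv.symm ⟨k, hk⟩)
    simpa using this
  · have hk' : ((∑ i, d i : ℕ) : WithBot ℕ) ≤ k := by exact_mod_cast not_lt.1 hk
    rw [Polynomial.coeff_eq_zero_of_degree_lt (hf.trans_le hk'),
      Polynomial.coeff_eq_zero_of_degree_lt (hg.trans_le hk')]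

end decomp

theorem det_NN_ne_zero {F : Type} [Field F] {m : ℕ} {d : Fin m → ℕ} {f : Fin m → F[X]} (i0 : Fin m)
    (hf : ∀ i, (f i).natDegree ≤ d i) (hf0 : ∀ i, f i ≠ 0)
    (hd : ∀ i, i ≠ i0 → (f i).natDegree = d i)
    (hco : Pairwise fun i j => IsCoprime (f i) (f j)) :
    (NN f : Matrix ((i : Fin m) × Fin (d i)) _ F).det ≠ 0 := by
  intro h
  obtain ⟨v, hv0, hv⟩ := Matrix.exists_vecMul_eq_zero_iff.2 h
  apply hv0
  have hcomb : ∑ i, UU v i * PP f i = 0 := by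
    refine eq_of_coeff_sigma (d := d) (degree_comb_lt hf (degree_UU_lt v)) ?_ fun t => ?_
    · rw [Polynomial.degree_zero]; exact WithBot.bot_lt_coe _
    · rw [← vecMul_NN, hv]; simp
  have hU : ∀ i, i ≠ i0 → UU v i = 0 := by
    intro i hi
    have h1 : f i ∣ UU v i * PP f i := by
      rw [← Finset.add_sum_erase _ _ (Finset.mem_univ i)] at hcomb
      rw [eq_neg_of_add_eq_zero_left hcomb]
      refine (dvd_neg.2 (Finset.dvd_sum fun j hj => ?_))
      exact Dvd.dvd.mul_left (dvd_PP f (Finset.ne_of_mem_erase hj).symm) _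
    have h2 : IsCoprime (f i) (PP f i) :=
      IsCoprime.prod_right fun j hj => hco (Finset.ne_of_mem_erase hj).symm
    have h3 := h2.dvd_of_dvd_mul_right h1
    refine Polynomial.eq_zero_of_dvd_of_degree_lt h3 ?_
    rw [Polynomial.degree_eq_natDegree (hf0 i), hd i hi]
    exact degree_UU_lt v i
  have hU0 : UU v i0 = 0 := by
    rw [Finset.sum_eq_single i0 (fun j _ hj => by rw [hU j hj, zero_mul]) (by simp)] at hcomb
    refine (mul_eq_zero.1 hcomb).resolve_right ?_
    exact Finset.prod_ne_zero_iff.2 fun j _ => hf0 j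
  funext ⟨i, k⟩
  rw [← coeff_UU v i k]
  by_cases hi : i = i0
  · subst hi; rw [hU0]; simp
  · rw [hU i hi]; simp

theorem exists_decomp {m : ℕ} {d : Fin m → ℕ} {f : Fin m → ℤ_[p][X]} (i0 : Fin m)
    (hf : ∀ i, (f i).natDegree ≤ d i) (hf0 : ∀ i, (f i).map (PadicInt.toZMod (p := p)) ≠ 0)
    (hd : ∀ i, i ≠ i0 → ((f i).map (PadicInt.toZMod (p := p))).natDegree = d i)
    (hco : Pairwise fun i j => IsCoprime ((f i).map (PadicInt.toZMod (p := p)))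
      ((f j).map (PadicInt.toZMod (p := p))))
    (w : ℤ_[p][X]) (hw : w.degree < (∑ i, d i : ℕ)) :
    ∃ u : Fin m → ℤ_[p][X], (∀ i, (u i).degree < d i) ∧ w = ∑ i, u i * PP f i := by
  set N : Matrix ((i : Fin m) × Fin (d i)) _ ℤ_[p] := NN f with hN
  have hdet : IsUnit N.det := by
    apply isUnit_of_toZMod_ne_zero
    rw [RingHom.map_det]
    have : (PadicInt.toZMod (p := p)).mapMatrix N =
        NN (fun i => (f i).map (PadicInt.toZMod (p := p))) := by
      ext s t
      simp only [hN, NN, RingHom.mapMatrix_apply, Matrix.map_apply, Matrix.of_apply, ← map_PP,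
        ← Polynomial.coeff_map, Polynomial.map_mul, Polynomial.map_pow, Polynomial.map_X]
    rw [this]
    exact det_NN_ne_zero i0 (fun i => Polynomial.natDegree_map_le.trans (hf i)) hf0 hd hco
  set v := (fun t => w.coeff (finSigmaFinEquiv t : ℕ)) ᵥ* N⁻¹ with hv
  refine ⟨UU v, degree_UU_lt v, ?_⟩
  refine eq_of_coeff_sigma hw (degree_comb_lt hf (degree_UU_lt v)) fun t => ?_
  rw [← vecMul_NN, ← hN, hv, Matrix.vecMul_vecMul, Matrix.nonsing_inv_mul _ hdet, Matrix.vecMul_one]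
-- PART 4
theorem aeval_θF_eq_mk (n : ℕ) (c : ℕ → ℤ_[p]) (u : ℤ_[p][X]) :
    aeval (θF ℤ_[p] ℚ_[p] n c) u =
      AdjoinRoot.mk (binPoly ℤ_[p] ℚ_[p] n c) (u.map (algebraMap ℤ_[p] ℚ_[p])) := by
  rw [← AdjoinRoot.aeval_eq, aeval_map_algebraMap, θF]

/-- The data and facts extracted from a canonical factorization. -/
structure Good (n : ℕ) (c : ℕ → ℤ_[p]) (m : ℕ) (d : Fin m → ℕ) (cF : Fin m → ℕ → ℤ_[p]) : Prop where
  hn : 1 ≤ n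
  hc : c 0 ≠ 0
  hprim : PrimP p n c
  hsum : ∑ i, d i = n
  hprod : binPolyR ℤ_[p] n c = ∏ i, binPolyR ℤ_[p] (d i) (cF i)
  lead : ∀ i, cF i 0 ≠ 0
  prim : ∀ i, PrimP p (d i) (cF i)
  sep : (binPoly ℤ_[p] ℚ_[p] n c).Separable
  dec : ∀ w : ℤ_[p][X], w.degree < n → ∃ u : Fin m → ℤ_[p][X], (∀ i, (u i).degree < d i) ∧
    w = ∑ i, u i * PP (fun i => binPolyR ℤ_[p] (d i) (cF i)) i

namespace Good
variable {n : ℕ} {c : ℕ → ℤ_[p]} {m : ℕ} {d : Fin m → ℕ} {cF : Fin m → ℕ → ℤ_[p]}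

theorem prodK (H : Good n c m d cF) :
    binPoly ℤ_[p] ℚ_[p] n c = ∏ i, binPoly ℤ_[p] ℚ_[p] (d i) (cF i) := by
  simp only [binPoly_eq_map]
  rw [H.hprod, Polynomial.map_prod]

theorem dvdK (H : Good n c m d cF) (i : Fin m) :
    binPoly ℤ_[p] ℚ_[p] (d i) (cF i) ∣ binPoly ℤ_[p] ℚ_[p] n c := by
  rw [H.prodK]; exact Finset.dvd_prod_of_mem _ (Finset.mem_univ i)

theorem sepK (H : Good n c m d cF) (i : Fin m) :
    (binPoly ℤ_[p] ℚ_[p] (d i) (cF i)).Separable := H.sep.of_dvd (H.dvdK i)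

theorem coPP (H : Good n c m d cF) (i : Fin m) :
    IsCoprime (binPoly ℤ_[p] ℚ_[p] (d i) (cF i))
      (PP (fun i => binPoly ℤ_[p] ℚ_[p] (d i) (cF i)) i) := by
  apply Polynomial.Separable.isCoprime
  have := H.sep
  rw [H.prodK] at this
  rwa [mul_PP (fun i => binPoly ℤ_[p] ℚ_[p] (d i) (cF i)) i]

theorem coK (H : Good n c m d cF) : Pairwise fun i j =>
    IsCoprime (binPoly ℤ_[p] ℚ_[p] (d i) (cF i)) (binPoly ℤ_[p] ℚ_[p] (d j) (cF j)) :=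
  fun i _ hij => (H.coPP i).of_isCoprime_of_dvd_right
    (dvd_PP (fun i => binPoly ℤ_[p] ℚ_[p] (d i) (cF i)) hij.symm)

/-- The projections `K_F → K_{F_i}`. -/
def φ (H : Good n c m d cF) (i : Fin m) :
    KF ℤ_[p] ℚ_[p] n c →ₐ[ℤ_[p]] KF ℤ_[p] ℚ_[p] (d i) (cF i) :=
  (AdjoinRoot.liftAlgHom (binPoly ℤ_[p] ℚ_[p] n c) (Algebra.ofId ℚ_[p] _)
    (AdjoinRoot.root (binPoly ℤ_[p] ℚ_[p] (d i) (cF i))) (by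
      have h : aeval (AdjoinRoot.root (binPoly ℤ_[p] ℚ_[p] (d i) (cF i)))
          (binPoly ℤ_[p] ℚ_[p] n c) = 0 := by
        rw [AdjoinRoot.aeval_eq, AdjoinRoot.mk_eq_zero]
        exact H.dvdK i
      exact h)).restrictScalars ℤ_[p]

theorem φ_mk (H : Good n c m d cF) (i : Fin m) (g : ℚ_[p][X]) :
    H.φ i (AdjoinRoot.mk _ g) = AdjoinRoot.mk _ g := by
  rw [← AdjoinRoot.aeval_eq (f := binPoly ℤ_[p] ℚ_[p] (d i) (cF i))]
  rfl

theorem φ_aeval (H : Good n c m d cF) (i : Fin m) (u : ℤ_[p][X]) :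
    H.φ i (aeval (θF ℤ_[p] ℚ_[p] n c) u) = aeval (θF ℤ_[p] ℚ_[p] (d i) (cF i)) u := by
  rw [aeval_θF_eq_mk, aeval_θF_eq_mk, φ_mk]

theorem φ_inj (H : Good n c m d cF) {x y : KF ℤ_[p] ℚ_[p] n c} (h : ∀ i, H.φ i x = H.φ i y) :
    x = y := by
  rw [← sub_eq_zero]
  replace h : ∀ i, H.φ i (x - y) = 0 := fun i => by rw [map_sub, h i, sub_self]
  obtain ⟨g, hg⟩ := AdjoinRoot.mk_surjective (x - y)
  rw [← hg] at h ⊢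
  rw [AdjoinRoot.mk_eq_zero, H.prodK]
  refine Fintype.prod_dvd_of_coprime H.coK fun i => ?_
  have := h i
  rwa [φ_mk, AdjoinRoot.mk_eq_zero] at this

theorem isUnit_PP (H : Good n c m d cF) (i : Fin m) :
    IsUnit (AdjoinRoot.mk (binPoly ℤ_[p] ℚ_[p] (d i) (cF i))
      (PP (fun i => binPoly ℤ_[p] ℚ_[p] (d i) (cF i)) i)) := by
  obtain ⟨a, b, hab⟩ := H.coPP i
  refine IsUnit.of_mul_eq_one (AdjoinRoot.mk _ b) ?_
  rw [← map_mul, ← map_one (AdjoinRoot.mk _), ← sub_eq_zero, ← map_sub, AdjoinRoot.mk_eq_zero]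
  exact ⟨-a, by linear_combination hab⟩

theorem isUnit_PP' (H : Good n c m d cF) (i : Fin m) :
    IsUnit (aeval (θF ℤ_[p] ℚ_[p] (d i) (cF i))
      (PP (fun i => binPolyR ℤ_[p] (d i) (cF i)) i)) := by
  have := H.isUnit_PP i
  rwa [← AdjoinRoot.aeval_eq, show (fun i => binPoly ℤ_[p] ℚ_[p] (d i) (cF i)) =
    fun i => (binPolyR ℤ_[p] (d i) (cF i)).map (algebraMap ℤ_[p] ℚ_[p]) from
      funext fun i => binPoly_eq_map _ _, ← map_PP, aeval_map_algebraMap] at this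

theorem φ_surj (H : Good n c m d cF) (y : ∀ i, KF ℤ_[p] ℚ_[p] (d i) (cF i)) :
    ∃ x, ∀ i, H.φ i x = y i := by
  have : ∀ i, ∃ g : ℚ_[p][X], AdjoinRoot.mk (binPoly ℤ_[p] ℚ_[p] (d i) (cF i))
      (g * PP (fun i => binPoly ℤ_[p] ℚ_[p] (d i) (cF i)) i) = y i := by
    intro i
    obtain ⟨b, hb⟩ := (H.isUnit_PP i).exists_left_inv
    obtain ⟨g, hg⟩ := AdjoinRoot.mk_surjective (y i * b)
    exact ⟨g, by rw [map_mul, hg, mul_assoc, hb, mul_one]⟩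
  choose g hg using this
  refine ⟨AdjoinRoot.mk _ (∑ i, g i * PP (fun i => binPoly ℤ_[p] ℚ_[p] (d i) (cF i)) i), ?_⟩
  intro i
  rw [φ_mk, map_sum, Finset.sum_eq_single i, hg]
  · intro j _ hj
    rw [AdjoinRoot.mk_eq_zero]
    exact Dvd.dvd.mul_left (dvd_PP (fun i => binPoly ℤ_[p] ℚ_[p] (d i) (cF i)) hj.symm) _
  · simp

theorem aeval_comb (_H : Good n c m d cF) (i : Fin m) (u : Fin m → ℤ_[p][X]) :
    aeval (θF ℤ_[p] ℚ_[p] (d i) (cF i))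
      (∑ j, u j * PP (fun i => binPolyR ℤ_[p] (d i) (cF i)) j) =
    aeval (θF ℤ_[p] ℚ_[p] (d i) (cF i)) (u i) * aeval (θF ℤ_[p] ℚ_[p] (d i) (cF i))
      (PP (fun i => binPolyR ℤ_[p] (d i) (cF i)) i) := by
  rw [map_sum, Finset.sum_eq_single i, map_mul]
  · intro j _ hj
    obtain ⟨q, hq⟩ := dvd_PP (fun i => binPolyR ℤ_[p] (d i) (cF i)) hj.symm
    rw [hq, map_mul, map_mul, aeval_θF_self]
    simp
  · simp

theorem degree_comb (H : Good n c m d cF) {u : Fin m → ℤ_[p][X]} (hu : ∀ i, (u i).degree < d i) :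
    (∑ j, u j * PP (fun i => binPolyR ℤ_[p] (d i) (cF i)) j).degree < n := by
  have := degree_comb_lt (f := fun i => binPolyR ℤ_[p] (d i) (cF i))
    (fun i => natDegree_binPolyR_le (d i) (cF i)) hu
  rwa [H.hsum] at this

theorem subsing (H : Good n c m d cF) {i : Fin m} (hi : d i = 0) :
    Subsingleton (KF ℤ_[p] ℚ_[p] (d i) (cF i)) := by
  have hu : IsUnit (binPoly ℤ_[p] ℚ_[p] (d i) (cF i)) := by
    rw [Polynomial.isUnit_iff_degree_eq_zero,
      Polynomial.degree_eq_natDegree (binPoly_ne_zero _ _ (H.lead i)),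
      natDegree_binPoly _ _ (H.lead i), hi]
    rfl
  rw [← subsingleton_iff_zero_eq_one, ← map_one (AdjoinRoot.mk _), eq_comm, AdjoinRoot.mk_eq_zero]
  exact hu.dvd

theorem mem_iff_factor (H : Good n c m d cF) (i : Fin m) (x : KF ℤ_[p] ℚ_[p] (d i) (cF i)) :
    x ∈ RFmod ℤ_[p] ℚ_[p] (d i) (cF i) ↔ ∀ y ∈ LL (d i) (cF i), x * y ∈ LL (d i) (cF i) := by
  rcases Nat.eq_zero_or_pos (d i) with h | h
  · have := H.subsing h
    have hx : x = 0 := Subsingleton.elim _ _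
    rw [hx]
    simp
  · exact mem_RFmod_iff h (H.lead i) (H.prim i) x

/-- Under the Chinese remainder isomorphism, `R_F = ∏ R_{F_i}`. -/
theorem mem_iff (H : Good n c m d cF) (x : KF ℤ_[p] ℚ_[p] n c) :
    x ∈ RFmod ℤ_[p] ℚ_[p] n c ↔ ∀ i, H.φ i x ∈ RFmod ℤ_[p] ℚ_[p] (d i) (cF i) := by
  rw [mem_RFmod_iff H.hn H.hc H.hprim]
  simp only [H.mem_iff_factor]
  constructor
  · intro h i y hy
    obtain ⟨u, hu, rfl⟩ := mem_LL.1 hy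
    have h1 : ∀ j, ((Pi.single i u : Fin m → ℤ_[p][X]) j).degree < d j := by
      intro j
      by_cases hj : j = i
      · subst hj; simpa using hu
      · rw [Pi.single_eq_of_ne hj, Polynomial.degree_zero]; exact WithBot.bot_lt_coe _
    obtain ⟨w, hw, hwe⟩ := mem_LL.1 (h _ (mem_LL.2 ⟨_, H.degree_comb h1, rfl⟩))
    obtain ⟨v, hv, rfl⟩ := H.dec w hw
    have h2 := congrArg (H.φ i) hwe
    rw [map_mul, φ_aeval, φ_aeval, H.aeval_comb, H.aeval_comb, Pi.single_eq_same, ← mul_assoc] at h2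
    rw [← (H.isUnit_PP' i).mul_right_cancel h2]
    exact mem_LL.2 ⟨v i, hv i, rfl⟩
  · intro h y hy
    obtain ⟨w, hw, rfl⟩ := mem_LL.1 hy
    obtain ⟨u, hu, rfl⟩ := H.dec w hw
    have h1 : ∀ i, ∃ v : ℤ_[p][X], v.degree < d i ∧ aeval (θF ℤ_[p] ℚ_[p] (d i) (cF i)) v =
        H.φ i x * aeval (θF ℤ_[p] ℚ_[p] (d i) (cF i)) (u i) :=
      fun i => mem_LL.1 (h i _ (mem_LL.2 ⟨u i, hu i, rfl⟩))
    choose v hv hve using h1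
    refine mem_LL.2 ⟨_, H.degree_comb hv, H.φ_inj fun i => ?_⟩
    rw [map_mul, φ_aeval, φ_aeval, H.aeval_comb, H.aeval_comb, hve, mul_assoc]

theorem isIntegral_iff (H : Good n c m d cF) (x : KF ℤ_[p] ℚ_[p] n c) :
    IsIntegral ℤ_[p] x ↔ ∀ i, IsIntegral ℤ_[p] (H.φ i x) := by
  refine ⟨fun h i => h.map (H.φ i), fun h => ?_⟩
  choose g hg hgx using h
  refine ⟨∏ i, g i, Polynomial.monic_prod_of_monic _ _ fun i _ => hg i, ?_⟩
  rw [← aeval_def]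
  refine H.φ_inj fun i => ?_
  rw [map_zero, ← aeval_algHom_apply, map_prod]
  exact Finset.prod_eq_zero (Finset.mem_univ i) (hgx i)

theorem isMax_iff (H : Good n c m d cF) :
    IsMaxOrder ℤ_[p] ℚ_[p] n c ↔
      ∀ i : Fin m, 1 ≤ d i → IsMaxOrder ℤ_[p] ℚ_[p] (d i) (cF i) := by
  constructor
  · intro h i _
    ext x
    obtain ⟨y, hy⟩ := H.φ_surj (Pi.single i x)
    have h1 := H.mem_iff y
    have h2 := H.isIntegral_iff y
    have h3 : y ∈ RFmod ℤ_[p] ℚ_[p] n c ↔ IsIntegral ℤ_[p] y := by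
      rw [h, Subalgebra.mem_toSubmodule]; rfl
    rw [Subalgebra.mem_toSubmodule]
    change _ ↔ IsIntegral _ _
    have h4 : (∀ j, H.φ j y ∈ RFmod ℤ_[p] ℚ_[p] (d j) (cF j)) ↔
        x ∈ RFmod ℤ_[p] ℚ_[p] (d i) (cF i) := by
      simp only [hy]
      refine ⟨fun h => by simpa using h i, fun h j => ?_⟩
      by_cases hj : j = i
      · subst hj; simpa using h
      · rw [Pi.single_eq_of_ne hj]; exact Submodule.zero_mem _
    have h5 : (∀ j, IsIntegral ℤ_[p] (H.φ j y)) ↔ IsIntegral ℤ_[p] x := by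
      simp only [hy]
      refine ⟨fun h => by simpa using h i, fun h j => ?_⟩
      by_cases hj : j = i
      · subst hj; simpa using h
      · rw [Pi.single_eq_of_ne hj]; exact isIntegral_zero
    rw [← h4, ← h5, ← h1, ← h2, h3]
  · intro h
    ext x
    rw [Subalgebra.mem_toSubmodule]
    change _ ↔ IsIntegral _ _
    rw [H.mem_iff, H.isIntegral_iff]
    refine forall_congr' fun i => ?_
    rcases Nat.eq_zero_or_pos (d i) with h0 | h0
    · have := H.subsing h0
      have hx : H.φ i x = 0 := Subsingleton.elim _ _
      rw [hx]
      exact iff_of_true (Submodule.zero_mem _) isIntegral_zero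
    · rw [h i h0, Subalgebra.mem_toSubmodule]; rfl

end Good

theorem RFalg_eq_of_isMax {n : ℕ} {c : ℕ → ℤ_[p]} (h : IsMaxOrder ℤ_[p] ℚ_[p] n c) :
    RFalg ℤ_[p] ℚ_[p] n c = integralClosure ℤ_[p] (KF ℤ_[p] ℚ_[p] n c) := by
  apply le_antisymm
  · refine Algebra.adjoin_le ?_
    rintro x ⟨i, h1, h2, rfl⟩
    have := ζF_mem_RFmod (c := c) h1 h2
    rw [h] at this
    exact this
  · intro x hx
    have hx' : x ∈ RFmod ℤ_[p] ℚ_[p] n c := by rw [h]; exact hx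
    have hle : RFmod ℤ_[p] ℚ_[p] n c ≤ Subalgebra.toSubmodule (RFalg ℤ_[p] ℚ_[p] n c) := by
      refine Submodule.span_le.2 ?_
      rintro y (hy | hy)
      · rw [Set.mem_singleton_iff.1 hy]; exact Subalgebra.one_mem _
      · exact Algebra.subset_adjoin hy
    exact hle hx'

theorem mem_RFalg_iff_of_isMax {n : ℕ} {c : ℕ → ℤ_[p]} (h : IsMaxOrder ℤ_[p] ℚ_[p] n c)
    (x : KF ℤ_[p] ℚ_[p] n c) : x ∈ RFalg ℤ_[p] ℚ_[p] n c ↔ IsIntegral ℤ_[p] x := by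
  rw [RFalg_eq_of_isMax h]; rfl

theorem iso_aux {R A ι : Type} [CommRing R] [CommRing A] [Algebra R A] {B : ι → Type}
    [∀ i, CommRing (B i)] [∀ i, Algebra R (B i)] (φ : ∀ i, A →ₐ[R] B i) (SA : Subalgebra R A)
    (SB : ∀ i, Subalgebra R (B i)) (hinj : ∀ x y : A, (∀ i, φ i x = φ i y) → x = y)
    (h1 : ∀ x ∈ SA, ∀ i, φ i x ∈ SB i)
    (h2 : ∀ y : ∀ i, B i, (∀ i, y i ∈ SB i) → ∃ x ∈ SA, ∀ i, φ i x = y i) :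
    Nonempty (SA ≃ₐ[R] ((i : ι) → SB i)) := by
  let Φ : SA →ₐ[R] ((i : ι) → SB i) :=
    AlgHom.pi fun i => ((φ i).comp SA.val).codRestrict (SB i) fun x => h1 x.1 x.2 i
  have hΦ : ∀ x i, ((Φ x i : SB i) : B i) = φ i x := fun x i => rfl
  refine ⟨AlgEquiv.ofBijective Φ ⟨fun x y hxy => ?_, fun y => ?_⟩⟩
  · apply Subtype.ext
    refine hinj _ _ fun i => ?_
    rw [← hΦ x i, hxy, hΦ]
  · obtain ⟨x, hxm, hx⟩ := h2 (fun i => (y i).1) (fun i => (y i).2)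
    refine ⟨⟨x, hxm⟩, ?_⟩
    funext i
    apply Subtype.ext
    rw [hΦ, hx]

theorem Good.iso {n : ℕ} {c : ℕ → ℤ_[p]} {m : ℕ} {d : Fin m → ℕ} {cF : Fin m → ℕ → ℤ_[p]}
    (H : Good n c m d cF) (h : IsMaxOrder ℤ_[p] ℚ_[p] n c) :
    Nonempty (↥(RFalg ℤ_[p] ℚ_[p] n c) ≃ₐ[ℤ_[p]]
        ((i : {i : Fin m // 1 ≤ d i}) → ↥(RFalg ℤ_[p] ℚ_[p] (d i.1) (cF i.1)))) := by
  have hi := H.isMax_iff.1 h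
  refine iso_aux (fun i : {i : Fin m // 1 ≤ d i} => H.φ i.1) (RFalg ℤ_[p] ℚ_[p] n c)
    (fun i => RFalg ℤ_[p] ℚ_[p] (d i.1) (cF i.1)) ?_ ?_ ?_
  · intro x y hxy
    refine H.φ_inj fun i => ?_
    rcases Nat.eq_zero_or_pos (d i) with h0 | h0
    · have := H.subsing h0
      exact Subsingleton.elim _ _
    · exact hxy ⟨i, h0⟩
  · intro x hx i
    rw [mem_RFalg_iff_of_isMax (hi i.1 i.2)]
    exact ((mem_RFalg_iff_of_isMax h _).1 hx).map (H.φ i.1)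
  · intro y hy
    obtain ⟨x, hx⟩ := H.φ_surj fun i => if h0 : 1 ≤ d i then y ⟨i, h0⟩ else 0
    refine ⟨x, ?_, fun i => ?_⟩
    · rw [mem_RFalg_iff_of_isMax h, H.isIntegral_iff]
      intro i
      rw [hx]
      split_ifs with h0
      · exact (mem_RFalg_iff_of_isMax (hi i h0) _).1 (hy ⟨i, h0⟩)
      · exact isIntegral_zero
    · rw [hx, dif_pos i.2]
-- PART 5
theorem map_binPolyR_toZMod (n : ℕ) (c : ℕ → ℤ_[p]) :
    (binPolyR ℤ_[p] n c).map (PadicInt.toZMod (p := p)) = redPolyDeg p n c := by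
  simp [binPolyR, redPolyDeg, Polynomial.map_sum]

theorem idem_of_isMax {n : ℕ} {c : ℕ → ℤ_[p]} (hmax : IsMaxOrder ℤ_[p] ℚ_[p] n c)
    {t : KF ℤ_[p] ℚ_[p] n c} (ht : IsIntegral ℤ_[p] t) {g : ℤ_[p][X]} (hg : aeval t g = 0)
    {Q : (ZMod p)[X]} (hQ : Irreducible Q) {e : ℕ}
    (hgQ : g.map (PadicInt.toZMod (p := p)) ∣ Q ^ e)
    (hζ : ∀ i, 1 ≤ i → i ≤ n - 1 → ζF ℤ_[p] ℚ_[p] n c i ∈ Algebra.adjoin ℤ_[p] {t})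
    (x : KF ℤ_[p] ℚ_[p] n c) (hx : x * x = x) : x = 0 ∨ x = 1 := by
  refine idem_trivial ht hg hQ hgQ ?_ hx
  have h1 : x ∈ RFalg ℤ_[p] ℚ_[p] n c :=
    (mem_RFalg_iff_of_isMax hmax x).2 (isIntegral_of_idem hx)
  refine (Algebra.adjoin_le ?_ : RFalg ℤ_[p] ℚ_[p] n c ≤ _) h1
  rintro y ⟨i, h1, h2, rfl⟩
  exact hζ i h1 h2

theorem idem_monic {n : ℕ} {c : ℕ → ℤ_[p]} (hmax : IsMaxOrder ℤ_[p] ℚ_[p] n c) (hc : c 0 = 1)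
    {Q : (ZMod p)[X]} (hQ : Irreducible Q) {e : ℕ} (hred : redPolyDeg p n c = Q ^ e)
    (x : KF ℤ_[p] ℚ_[p] n c) (hx : x * x = x) : x = 0 ∨ x = 1 := by
  refine idem_of_isMax hmax (t := θF ℤ_[p] ℚ_[p] n c) (g := binPolyR ℤ_[p] n c) ?_
    (aeval_θF_self n c) hQ (e := e) ?_ ?_ x hx
  · refine ⟨binPolyR ℤ_[p] n c, ?_, ?_⟩
    · rw [Polynomial.Monic, Polynomial.leadingCoeff,
        natDegree_binPolyR n c (by rw [hc]; exact one_ne_zero)]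
      have := coeff_binPolyR n c (Nat.zero_le n)
      rwa [Nat.sub_zero, hc] at this
    · exact aeval_θF_self n c
  · rw [map_binPolyR_toZMod, hred]
  · intro i _ _
    rw [ζF]
    refine Subalgebra.sum_mem _ fun j _ => Subalgebra.mul_mem _ (Subalgebra.algebraMap_mem _ _)
      (Subalgebra.pow_mem _ (Algebra.self_mem_adjoin_singleton _ _) _)

theorem idem_infty {n : ℕ} {c : ℕ → ℤ_[p]} (hmax : IsMaxOrder ℤ_[p] ℚ_[p] n c) (hn : 1 ≤ n)
    (h0 : ∀ j < n, PadicInt.toZMod (c j) = 0) (hu : IsUnit (c n))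
    (x : KF ℤ_[p] ℚ_[p] n c) (hx : x * x = x) : x = 0 ∨ x = 1 := by
  obtain ⟨s, hs⟩ := hu.exists_right_inv
  set θ := θF ℤ_[p] ℚ_[p] n c with hθ
  have hsum := sum_θF n c
  rw [← hθ] at hsum
  -- the inverse of θ
  obtain ⟨t, ht⟩ : ∃ t, θ * t = 1 := by
    refine ⟨-(algebraMap ℤ_[p] _ s) * ∑ i ∈ Finset.range n, algebraMap ℤ_[p] _ (c i) *
      θ ^ (n - i - 1), ?_⟩
    rw [Finset.sum_range_succ, Nat.sub_self, pow_zero, mul_one] at hsum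
    have h1 : ∑ i ∈ Finset.range n, algebraMap ℤ_[p] (KF ℤ_[p] ℚ_[p] n c) (c i) * θ ^ (n - i) =
        θ * ∑ i ∈ Finset.range n, algebraMap ℤ_[p] _ (c i) * θ ^ (n - i - 1) := by
      rw [Finset.mul_sum]
      refine Finset.sum_congr rfl fun i hi => ?_
      have := Finset.mem_range.1 hi
      obtain ⟨k, hk⟩ : ∃ k, n - i = k + 1 := ⟨n - i - 1, by omega⟩
      rw [hk, Nat.add_sub_cancel, pow_succ]; ring
    rw [h1] at hsum
    have h2 : algebraMap ℤ_[p] (KF ℤ_[p] ℚ_[p] n c) (c n) * algebraMap ℤ_[p] _ s = 1 := by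
      rw [← map_mul, hs, map_one]
    linear_combination -(algebraMap ℤ_[p] _ s) * hsum + h2
  have hθt : ∀ a b : ℕ, θ ^ (a + b) * t ^ b = θ ^ a := by
    intro a b
    rw [pow_add, mul_assoc, ← mul_pow, ht, one_pow, mul_one]
  have hθt' : ∀ a b : ℕ, θ ^ b * t ^ (a + b) = t ^ a := by
    intro a b
    rw [pow_add, mul_comm (t ^ a), ← mul_assoc, ← mul_pow, ht, one_pow, one_mul]
  set g : ℤ_[p][X] := ∑ l ∈ Finset.range (n + 1), C (c l * s) * X ^ l with hg
  have hgt : aeval t g = 0 := by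
    have h1 := congrArg (fun y => algebraMap ℤ_[p] _ s * (y * t ^ n)) hsum
    simp only [zero_mul, mul_zero] at h1
    rw [← h1, hg, map_sum, Finset.sum_mul, Finset.mul_sum]
    refine Finset.sum_congr rfl fun l hl => ?_
    have hl := Finset.mem_range.1 hl
    have h3 := hθt' l (n - l)
    rw [show l + (n - l) = n by omega] at h3
    rw [mul_assoc, h3]
    simp only [map_mul, aeval_C, map_pow, aeval_X]
    ring
  have hgc : ∀ l, g.coeff l = if l ≤ n then c l * s else 0 := by
    intro l
    rw [hg, Polynomial.finsetSum_coeff]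
    simp only [Polynomial.coeff_C_mul_X_pow]
    rw [Finset.sum_ite_eq]
    simp
  have hgd : g.natDegree ≤ n := by
    rw [Polynomial.natDegree_le_iff_coeff_eq_zero]
    intro N hN
    rw [hgc, if_neg (by omega)]
  have hgm : g.Monic := by
    refine Polynomial.monic_of_natDegree_le_of_coeff_eq_one n hgd ?_
    rw [hgc, if_pos le_rfl, hs]
  refine idem_of_isMax hmax (t := t) (g := g) ⟨g, hgm, hgt⟩ hgt (Q := X) Polynomial.irreducible_X
    (e := n) ?_ ?_ x hx
  · have : g.map (PadicInt.toZMod (p := p)) = X ^ n := by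
      ext l
      rw [Polynomial.coeff_map, hgc, Polynomial.coeff_X_pow]
      rcases lt_trichotomy l n with h | h | h
      · rw [if_pos h.le, map_mul, h0 l h, zero_mul, if_neg h.ne]
      · rw [if_pos h.le, if_pos h, h, hs, map_one]
      · rw [if_neg (by omega), if_neg (by omega), map_zero]
    rw [this]
  · intro i hi1 hi2
    have h1 : ζF ℤ_[p] ℚ_[p] n c i = - ∑ l ∈ Finset.Ico i (n + 1),
        algebraMap ℤ_[p] _ (c l) * t ^ (l - i) := by
      rw [← Finset.sum_range_add_sum_Ico _ (show i ≤ n + 1 by omega)] at hsum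
      have h2 := congrArg (fun y => y * t ^ (n - i)) hsum
      simp only [zero_mul, add_mul, Finset.sum_mul] at h2
      rw [eq_neg_iff_add_eq_zero, ← h2, ζF]
      congr 1
      · refine Finset.sum_congr rfl fun l hl => ?_
        have hl := Finset.mem_range.1 hl
        rw [mul_assoc, show n - l = (i - l) + (n - i) by omega, hθt]
      · refine Finset.sum_congr rfl fun l hl => ?_
        have hl := Finset.mem_Ico.1 hl
        rw [mul_assoc, show n - i = (l - i) + (n - l) by omega, hθt']
    rw [h1]
    refine Subalgebra.neg_mem _ (Subalgebra.sum_mem _ fun j _ => Subalgebra.mul_mem _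
      (Subalgebra.algebraMap_mem _ _)
      (Subalgebra.pow_mem _ (Algebra.self_mem_adjoin_singleton _ _) _))

theorem redPolyDeg_infty {n : ℕ} {c : ℕ → ℤ_[p]} (h0 : ∀ j < n, PadicInt.toZMod (c j) = 0) :
    redPolyDeg p n c = C (PadicInt.toZMod (c n)) := by
  rw [redPolyDeg, Finset.sum_range_succ, Finset.sum_eq_zero]
  · simp
  · intro i hi
    rw [h0 i (Finset.mem_range.1 hi)]; simp
end

/-- Lemma 3.3: given a canonical factorization `F = ∏ F_i` over `ℤ_p`,
`R_F` is maximal iff each `R_{F_i}` (for nonconstant `F_i`) is; in that case each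
nonconstant `F_i` is irreducible and `R_F ≅ ∏ R_{F_i}` as `ℤ_p`-algebras. -/
theorem maximality_along_canonical_factorization
    (p : ℕ) [Fact p.Prime]
    (n : ℕ) (hn : 3 ≤ n) (c : ℕ → ℤ_[p]) (hf0 : c 0 ≠ 0)
    (hsep : SepDegP p n c) (hprim : PrimP p n c)
    (m : ℕ) (hm : 0 < m) (d : Fin m → ℕ) (cF : Fin m → ℕ → ℤ_[p])
    (hsum : ∑ i, d i = n)
    (hprod : binPolyR ℤ_[p] n c = ∏ i, binPolyR ℤ_[p] (d i) (cF i))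
    (hlead : cF ⟨0, hm⟩ 0 = c 0)
    (hF1a : ∀ j < d ⟨0, hm⟩, PadicInt.toZMod (cF ⟨0, hm⟩ j) = 0)
    (hF1b : IsUnit (PadicInt.toZMod (cF ⟨0, hm⟩ (d ⟨0, hm⟩))))
    (hFi : ∀ i : Fin m, i ≠ ⟨0, hm⟩ → cF i 0 = 1 ∧
      ∃ (e : ℕ) (Q : Polynomial (ZMod p)), 0 < e ∧ Q.Monic ∧ Irreducible Q ∧
        d i = e * Q.natDegree ∧ redPolyDeg p (d i) (cF i) = Q ^ e)
    (hcop : ∀ i j : Fin m, i ≠ ⟨0, hm⟩ → j ≠ ⟨0, hm⟩ → i ≠ j →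
      IsCoprime (redPolyDeg p (d i) (cF i)) (redPolyDeg p (d j) (cF j))) :
    (IsMaxOrder ℤ_[p] ℚ_[p] n c ↔
      ∀ i : Fin m, 1 ≤ d i → IsMaxOrder ℤ_[p] ℚ_[p] (d i) (cF i)) ∧
    (IsMaxOrder ℤ_[p] ℚ_[p] n c →
      (∀ i : Fin m, 1 ≤ d i → Irreducible (binPoly ℤ_[p] ℚ_[p] (d i) (cF i))) ∧
      Nonempty (↥(RFalg ℤ_[p] ℚ_[p] n c) ≃ₐ[ℤ_[p]]
        ((i : {i : Fin m // 1 ≤ d i}) → ↥(RFalg ℤ_[p] ℚ_[p] (d i.1) (cF i.1))))) := by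
  set i0 : Fin m := ⟨0, hm⟩ with hi0
  have hunit : IsUnit (cF i0 (d i0)) := isUnit_of_toZMod_ne_zero hF1b.ne_zero
  have hred0 := redPolyDeg_infty hF1a
  have hunit0 : IsUnit (redPolyDeg p (d i0) (cF i0)) := by
    rw [hred0]; exact Polynomial.isUnit_C.2 hF1b
  have H : Good n c m d cF := by
    refine ⟨by omega, hf0, hprim, hsum, hprod, ?_, ?_, hsep.1, ?_⟩
    · intro i
      by_cases hi : i = i0
      · rw [hi, hlead]; exact hf0
      · rw [(hFi i hi).1]; exact one_ne_zero
    · intro i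
      by_cases hi : i = i0
      · rw [hi]; exact ⟨d i0, le_rfl, hunit⟩
      · exact ⟨0, Nat.zero_le _, by rw [(hFi i hi).1]; exact isUnit_one⟩
    · intro w hw
      refine exists_decomp i0 (fun i => natDegree_binPolyR_le (d i) (cF i)) ?_ ?_ ?_ w
        (by rw [hsum]; exact hw)
      · intro i
        rw [map_binPolyR_toZMod]
        by_cases hi : i = i0
        · rw [hi]; exact hunit0.ne_zero
        · obtain ⟨_, e, Q, _, hQm, _, _, hr⟩ := hFi i hi
          rw [hr]; exact (hQm.pow e).ne_zero
      · intro i hi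
        obtain ⟨_, e, Q, _, hQm, _, hd, hr⟩ := hFi i hi
        rw [map_binPolyR_toZMod, hr, hQm.natDegree_pow, hd]
      · intro i j hij
        simp only [map_binPolyR_toZMod]
        by_cases hi : i = i0
        · rw [hi]; exact isCoprime_one_left.of_isCoprime_of_dvd_left hunit0.dvd
        · by_cases hj : j = i0
          · rw [hj]; exact isCoprime_one_right.of_isCoprime_of_dvd_right hunit0.dvd
          · exact hcop i j hi hj hij
  refine ⟨H.isMax_iff, fun hmax => ⟨fun i hdi => ?_, H.iso hmax⟩⟩
  have hmi := H.isMax_iff.1 hmax i hdi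
  refine irreducible_of_idem (H.sepK i) ?_ ?_
  · rw [natDegree_binPoly _ _ (H.lead i)]; exact hdi
  · by_cases hi : i = i0
    · subst hi
      exact idem_infty hmi hdi hF1a hunit
    · obtain ⟨h1, e, Q, _, _, hQ, _, hr⟩ := hFi i hi
      exact idem_monic hmi h1 hQ hr

end BHS
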